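/- arXiv:2307.16237 — 10 statements merged into one kernel-verified Lean document; each statement's English description precedes it below -/
import Mathlib

section
/- Let R be a ring. Then the following are equivalent: (1) every nilpotent element of R is uniquely nil-clean; (2) the only idempotent of R that can be written as a sum of two nilpotent elements of R is 0, i.e., (nil(R) + nil(R)) ∩ idem(R) = {0}. -/
open Pointwise

section Defs

variable {R : Type*} [Ring R]

/-- An element is nil-clean if it is a sum of an idempotent and a nilpotent. -/
def IsNilCleanElem (a : R) : Prop :=
  ∃ e b : R, IsIdempotentElem e ∧ IsNilpotent b ∧ a = e + b

/-- An element is strongly nil-clean if it is a sum of a commuting idempotent and nilpotent. -/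
def IsStronglyNilCleanElem (a : R) : Prop :=
  ∃ e b : R, IsIdempotentElem e ∧ IsNilpotent b ∧ Commute e b ∧ a = e + b

/-- An element is uniquely nil-clean if it is nil-clean and the idempotent in any
nil-clean decomposition of it is unique. -/
def IsUniquelyNilCleanElem (a : R) : Prop :=
  IsNilCleanElem a ∧ ∀ e b f c : R, IsIdempotentElem e → IsNilpotent b →
    IsIdempotentElem f → IsNilpotent c → a = e + b → a = f + c → e = f

/-- An element is clean if it is a sum of an idempotent and a unit. -/
def IsCleanElem (a : R) : Prop :=
  ∃ e u : R, IsIdempotentElem e ∧ IsUnit u ∧ a = e + u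

/-- An element is uniquely clean if it is clean and the idempotent in any
clean decomposition of it is unique. -/
def IsUniquelyCleanElem (a : R) : Prop :=
  IsCleanElem a ∧ ∀ e u f v : R, IsIdempotentElem e → IsUnit u →
    IsIdempotentElem f → IsUnit v → a = e + u → a = f + v → e = f

end Defs

/-- A ring is abelian if every idempotent is central. -/
def IsAbelianRing (R : Type*) [Ring R] : Prop :=
  ∀ e : R, IsIdempotentElem e → ∀ r : R, e * r = r * e

/-- A ring is a UU-ring if every unit is unipotent. -/
def IsUURing (R : Type*) [Ring R] : Prop :=
  ∀ u : R, IsUnit u → ∃ b : R, IsNilpotent b ∧ u = 1 + b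

/-- A ring is a CUNC-ring if every clean element is uniquely nil-clean. -/
def IsCUNCRing (R : Type*) [Ring R] : Prop :=
  ∀ a : R, IsCleanElem a → IsUniquelyNilCleanElem a

/-- A ring is a CUC-ring if every clean element is uniquely clean. -/
def IsCUCRing (R : Type*) [Ring R] : Prop :=
  ∀ a : R, IsCleanElem a → IsUniquelyCleanElem a

/-- A ring is semipotent if every left ideal not contained in the Jacobson radical
contains a nonzero idempotent. -/
def IsSemipotentRing (R : Type*) [Ring R] : Prop :=
  ∀ L : Ideal R, ¬ L ≤ Ideal.jacobson (⊥ : Ideal R) → ∃ e ∈ L, e ≠ 0 ∧ IsIdempotentElem e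

/-- Every nilpotent element of `R` is uniquely nil-clean iff
`(nil(R) + nil(R)) ∩ idem(R) = {0}`. -/
theorem nilpotents_uniquelyNilClean_iff {R : Type*} [Ring R] :
    (∀ b : R, IsNilpotent b → IsUniquelyNilCleanElem b) ↔
      ({x : R | IsNilpotent x} + {x : R | IsNilpotent x}) ∩
        {x : R | IsIdempotentElem x} = {0} := by
  constructor
  · intro h
    apply Set.eq_singleton_iff_unique_mem.2
    refine ⟨⟨Set.mem_add.2 ⟨0, IsNilpotent.zero, 0, IsNilpotent.zero, add_zero 0⟩,
      IsIdempotentElem.zero⟩, ?_⟩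
    rintro e ⟨he, hi⟩
    obtain ⟨b, hb, c, hc, rfl⟩ := Set.mem_add.1 he
    -- `b = (b + c) + (-c) = 0 + b` are two nil-clean decompositions of `b`.
    exact (h b hb).2 (b + c) (-c) 0 b hi (IsNilpotent.neg hc) IsIdempotentElem.zero hb
      (by abel) (by abel)
  · intro h b hb
    -- If `b = e + c` is nil-clean, then `e = b + (-c)` is an idempotent sum of two nilpotents.
    have key : ∀ e c : R, IsIdempotentElem e → IsNilpotent c → b = e + c → e = 0 := by
      intro e c he hc hbe
      have hmem : e ∈ ({x : R | IsNilpotent x} + {x : R | IsNilpotent x}) ∩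
          {x : R | IsIdempotentElem x} :=
        ⟨Set.mem_add.2 ⟨b, hb, -c, IsNilpotent.neg hc, by rw [hbe]; abel⟩, he⟩
      rwa [h] at hmem
    refine ⟨⟨0, b, IsIdempotentElem.zero, hb, (zero_add b).symm⟩, ?_⟩
    intro e c f d he hc hf hd h1 h2
    rw [key e c he hc h1, key f d hf hd h2]
end

section
/- Let R be a ring. Then the following are equivalent: (1) every nil-clean element of R is uniquely nil-clean; (2) every strongly nil-clean element of R is uniquely nil-clean; (3) every idempotent of R is uniquely nil-clean; (4) R is an abelian ring; (5) every idempotent of R commutes with all nilpotent elements of R and (nil(R) + nil(R)) ∩ idem(R) = {0}; (6) (idem(R) − idem(R)) ∩ nil(R) = {0}, i.e., the only nilpotent element of R expressible as a difference of two idempotents is 0. -/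
/-!
The link between idempotents and nilpotents is the Peirce corner `e * r * (1 - e)` of an
idempotent `e`: it squares to zero, and adding it to `e` gives another idempotent. If every such
corner vanishes then, using `1 - e` as well, `e * r = e * r * e = r * e`, so the ring is abelian
(`isAbelianRing_of_corner`). Each of the other conditions kills the corners: the two
decompositions `(e + n) + 0 = e + n` do so under uniqueness, the difference `(e + n) - e = n`
does so when no nonzero nilpotent is a difference of idempotents, and `e * n = n`, `n * e = 0` do
so when idempotents commute with nilpotents.

Conversely, in an abelian ring `e + b = f + c` forces `b` and `c` to commute, so the difference
`e - f = c - b` of commuting idempotents is nilpotent; as `(e - f) ^ 3 = e - f`, it is zero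
(`eq_of_commute_of_isNilpotent_sub`). Likewise an idempotent sum `b + c` of two nilpotents is central,
so `b` and `c` commute, and `b + c` is both idempotent and nilpotent, hence zero.
-/

open Pointwise

section Helpers

variable {R : Type*} [Ring R]

theorem corner_mul_self {e : R} (he : IsIdempotentElem e) (r : R) :
    e * r * (1 - e) * (e * r * (1 - e)) = 0 := by
  have h : (1 - e) * e = 0 := by rw [sub_mul, one_mul, he.eq, sub_self]
  calc e * r * (1 - e) * (e * r * (1 - e))
      = e * r * ((1 - e) * e) * (r * (1 - e)) := by simp only [mul_assoc]
    _ = 0 := by rw [h]; simp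

theorem isNilpotent_corner {e : R} (he : IsIdempotentElem e) (r : R) :
    IsNilpotent (e * r * (1 - e)) :=
  ⟨2, by rw [pow_two, corner_mul_self he]⟩

theorem mul_corner {e : R} (he : IsIdempotentElem e) (r : R) :
    e * (e * r * (1 - e)) = e * r * (1 - e) := by
  rw [← mul_assoc, ← mul_assoc, he.eq]

theorem corner_mul {e : R} (he : IsIdempotentElem e) (r : R) :
    e * r * (1 - e) * e = 0 := by
  rw [mul_assoc, sub_mul, one_mul, he.eq, sub_self, mul_zero]

theorem isIdempotentElem_add_corner {e : R} (he : IsIdempotentElem e) (r : R) :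
    IsIdempotentElem (e + e * r * (1 - e)) := by
  unfold IsIdempotentElem
  rw [add_mul, mul_add, mul_add, he.eq, mul_corner he, corner_mul he, corner_mul_self he]
  simp

/-- A ring is abelian as soon as all corners `e R (1 - e)` vanish; applying this to `1 - e` also
kills `(1 - e) R e`. -/
theorem isAbelianRing_of_corner
    (h : ∀ e : R, IsIdempotentElem e → ∀ r : R, e * r * (1 - e) = 0) : IsAbelianRing R := by
  intro e he r
  have h1 := h e he r
  have h2 := h (1 - e) he.one_sub r
  rw [mul_sub, mul_one, sub_eq_zero] at h1
  rw [sub_sub_cancel, sub_mul, one_mul, sub_mul, sub_eq_zero] at h2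
  rw [h1, h2]

theorem isIdempotentElem_eq_zero_of_isNilpotent {e : R} (he : IsIdempotentElem e)
    (hn : IsNilpotent e) : e = 0 := by
  obtain ⟨n, hn⟩ := hn
  rw [← he.pow_succ_eq n, pow_succ, hn, zero_mul]

/-- Commuting idempotents that differ by a nilpotent coincide: the square `(e - f) ^ 2` is
idempotent and nilpotent, hence zero, and `e - f = (e - f) ^ 3`. -/
theorem eq_of_commute_of_isNilpotent_sub {e f : R} (he : IsIdempotentElem e)
    (hf : IsIdempotentElem f) (hc : Commute e f) (hn : IsNilpotent (e - f)) : e = f := by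
  have h3 : (e - f) * (e - f) * (e - f) = e - f := by
    have h1 : (e - f) * (e - f) = e + f - 2 * (e * f) := by
      rw [sub_mul, mul_sub, mul_sub, he.eq, hf.eq, ← hc.eq]; noncomm_ring
    have h2 : e * f * e = e * f := by rw [mul_assoc, ← hc.eq, ← mul_assoc, he.eq]
    have h4 : e * f * f = e * f := by rw [mul_assoc, hf.eq]
    rw [h1, sub_mul, add_mul, mul_sub e, mul_sub f, mul_assoc 2, mul_sub (e * f), h2, h4,
      he.eq, hf.eq, ← hc.eq]
    noncomm_ring
  have hsq : IsIdempotentElem ((e - f) * (e - f)) := by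
    unfold IsIdempotentElem
    rw [← mul_assoc, h3]
  have h0 := isIdempotentElem_eq_zero_of_isNilpotent hsq
    ((Commute.refl (e - f)).isNilpotent_mul_left hn)
  rw [h0, zero_mul] at h3
  exact (sub_eq_zero.mp h3.symm)

end Helpers

/-- Characterizations of NCUNC-rings: they are exactly the abelian rings. -/
theorem ncunc_tfae {R : Type*} [Ring R] :
    [∀ a : R, IsNilCleanElem a → IsUniquelyNilCleanElem a,
     ∀ a : R, IsStronglyNilCleanElem a → IsUniquelyNilCleanElem a,
     ∀ e : R, IsIdempotentElem e → IsUniquelyNilCleanElem e,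
     IsAbelianRing R,
     (∀ e : R, IsIdempotentElem e → ∀ b : R, IsNilpotent b → Commute e b) ∧
       ({x : R | IsNilpotent x} + {x : R | IsNilpotent x}) ∩
         {x : R | IsIdempotentElem x} = {0},
     ({x : R | IsIdempotentElem x} - {x : R | IsIdempotentElem x}) ∩
       {x : R | IsNilpotent x} = {0}].TFAE := by
  tfae_have 1 → 2 := fun h a ⟨e, b, he, hb, _, hab⟩ => h a ⟨e, b, he, hb, hab⟩
  tfae_have 2 → 3 := fun h e he =>
    h e ⟨e, 0, he, IsNilpotent.zero, Commute.zero_right e, (add_zero e).symm⟩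
  tfae_have 3 → 4 := by
    refine fun h => isAbelianRing_of_corner fun e he r => ?_
    have hf := isIdempotentElem_add_corner he r
    have := (h _ hf).2 _ 0 e _ hf IsNilpotent.zero he (isNilpotent_corner he r)
      (add_zero _).symm rfl
    simpa using this
  tfae_have 4 → 1 := by
    refine fun h a ha => ⟨ha, fun e b f c he hb hf hc h1 h2 => ?_⟩
    have hd : e - f = c - b := by
      rw [sub_eq_sub_iff_add_eq_add, ← h1, h2, add_comm]
    have hcb : Commute c b := by
      have hc' : c = e - f + b := by rw [hd, sub_add_cancel]
      rw [hc']
      have he' : Commute e b := h e he b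
      exact (he'.sub_left (h f hf b)).add_left (Commute.refl b)
    exact eq_of_commute_of_isNilpotent_sub he hf (h e he f)
      (hd ▸ hcb.isNilpotent_sub hc hb)
  tfae_have 4 → 5 := by
    refine fun h => ⟨fun e he b _ => h e he b, ?_⟩
    refine Set.Subset.antisymm ?_ ?_
    · rintro x ⟨⟨b, hb, c, hc, rfl⟩, hx⟩
      have hbc : Commute b c := by
        have hb' : Commute (b + c) c := h _ hx c
        simpa using hb'.sub_left (Commute.refl c)
      exact isIdempotentElem_eq_zero_of_isNilpotent hx (hbc.isNilpotent_add hb hc)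
    · rintro x rfl
      exact ⟨⟨0, IsNilpotent.zero, 0, IsNilpotent.zero, add_zero 0⟩, IsIdempotentElem.zero⟩
  tfae_have 5 → 4 := by
    refine fun h => isAbelianRing_of_corner fun e he r => ?_
    have := (h.1 e he _ (isNilpotent_corner he r)).eq
    rwa [mul_corner he, corner_mul he] at this
  tfae_have 4 → 6 := by
    refine fun h => Set.Subset.antisymm ?_ ?_
    · rintro x ⟨⟨e, he, f, hf, rfl⟩, hx⟩
      exact sub_eq_zero.mpr (eq_of_commute_of_isNilpotent_sub he hf (h e he f) hx)
    · rintro x rfl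
      exact ⟨⟨0, IsIdempotentElem.zero, 0, IsIdempotentElem.zero, sub_zero 0⟩,
        IsNilpotent.zero⟩
  tfae_have 6 → 4 := by
    refine fun h => isAbelianRing_of_corner fun e he r => ?_
    have hm : e * r * (1 - e) ∈ ({0} : Set R) := by
      rw [← h]
      exact ⟨⟨_, isIdempotentElem_add_corner he r, e, he, add_sub_cancel_left _ _⟩,
        isNilpotent_corner he r⟩
    exact hm
  tfae_finish
end

section
/- An idempotent e of a ring R is uniquely nil-clean if and only if e is central in R. -/
/-! If `e` is an idempotent and `t` lies in one of the off-diagonal Peirce corners `e R (1 - e)`,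
`(1 - e) R e`, then `e + t` is idempotent and `t ^ 2 = 0`; uniqueness of the decomposition
`e = (e + t) + (-t)` makes both corners vanish, which says that `e` is central. Conversely, if `e`
is central and `e = f + c` with `f` idempotent and `c` nilpotent, then `e` and `f` are commuting
idempotents whose difference is nilpotent, hence equal. -/

open Pointwise

/-- The corner perturbation `e + t` of an idempotent is again idempotent and `t` squares to zero,
so `e = (e + t) + (-t)` is another nil-clean decomposition,
and uniqueness forces `t = 0`. The conditions on `t` hold both for
`t = e * r * (1 - e)` and for `t = (1 - e) * r * e`. -/
lemma eq_zero_of_isUniquelyNilCleanElem {R : Type*} [Ring R] {e t : R} (he : IsIdempotentElem e)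
    (h : IsUniquelyNilCleanElem e) (hsum : e * t + t * e = t) (hsq : t * t = 0) : t = 0 := by
  have hidem : IsIdempotentElem (e + t) := by
    calc (e + t) * (e + t) = e * e + (e * t + t * e) + t * t := by noncomm_ring
      _ = e + t := by rw [he.eq, hsum, hsq, add_zero]
  have hnil : IsNilpotent (-t) := ⟨2, by rw [neg_sq, sq, hsq]⟩
  have := h.2 e 0 (e + t) (-t) he IsNilpotent.zero hidem hnil (by simp) (by simp)
  simpa using this.symm

/-- An idempotent of a ring is uniquely nil-clean iff it is central. -/
theorem idempotent_uniquelyNilClean_iff_central {R : Type*} [Ring R]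
    (e : R) (he : IsIdempotentElem e) :
    IsUniquelyNilCleanElem e ↔ ∀ r : R, e * r = r * e := by
  constructor
  · intro h r
    have he' : e * e = e := he
    have hl : ∀ x : R, e * (e * x) = e * x := fun x => by rw [← mul_assoc, he']
    have h1 : e * r * (1 - e) = 0 := by
      apply eq_zero_of_isUniquelyNilCleanElem he h <;>
        simp [mul_sub, sub_mul, mul_assoc, he', hl]
    have h2 : (1 - e) * r * e = 0 := by
      apply eq_zero_of_isUniquelyNilCleanElem he h <;>
        simp [mul_sub, sub_mul, mul_assoc, he', hl]
    -- Both sides equal `e * r * e`.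
    rw [mul_sub, mul_one, sub_eq_zero] at h1
    rw [sub_mul, sub_mul, one_mul, sub_eq_zero] at h2
    exact h1.trans h2.symm
  · intro hc
    have key : ∀ f c : R, IsIdempotentElem f → IsNilpotent c → e = f + c → e = f := by
      intro f c hf hn heq
      -- Two commuting idempotents with nilpotent difference coincide.
      refine eq_of_isNilpotent_sub_of_isIdempotentElem_of_commute he hf ?_ (hc f)
      rwa [sub_eq_of_eq_add' heq]
    exact ⟨⟨e, 0, he, IsNilpotent.zero, (add_zero e).symm⟩,
      fun f b g c hf hb hg hcn h1 h2 => (key f b hf hb h1).symm.trans (key g c hg hcn h2)⟩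
end

section
/- Let I be a nil two-sided ideal of a ring R. Then the following are equivalent: (1) R is an abelian ring; (2) the quotient ring R/I is an abelian ring and idempotents lift uniquely modulo I (that is, every idempotent of R/I is the image of an idempotent of R, and whenever e, f are idempotents of R with e − f ∈ I, then e = f). -/
/-!
The quotient map `R → R/I` has nil kernel `I`, so idempotents of `R/I` always lift to `R`.

If `R` is abelian, then every idempotent of `R/I`, being the image of a central element, is central;
and two idempotents of `R` congruent modulo `I` commute and have nilpotent difference, which forces
them to be equal.

Conversely, for an idempotent `e` and any `r`, the elements `e + e r (1 - e)` and
`e + (1 - e) r e` are idempotents. If the image of `e` is central, both are congruent to `e` modulo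
`I`; unique lifting then makes them equal to `e`, so that `e r = e r e = r e`.
-/

open Pointwise

/-- The hypothesis `e x + x e = x` says that `x` is off-diagonal in the Peirce decomposition of `e`;
it holds for `x = e r (1 - e)` and for `x = (1 - e) r e`, which also square to zero. -/
lemma isIdempotentElem_add_of_peirce {R : Type*} [Ring R] {e x : R} (he : IsIdempotentElem e)
    (h : e * x + x * e = x) (hx : x * x = 0) : IsIdempotentElem (e + x) := by
  have : (e + x) * (e + x) = e * e + (e * x + x * e) + x * x := by noncomm_ring
  rw [IsIdempotentElem, this, he.eq, h, hx, add_zero]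

/-- For a nil two-sided ideal `I` of `R`: `R` is abelian iff `R/I` is abelian and
idempotents lift uniquely modulo `I`. -/
theorem abelian_iff_quotient_abelian_and_idempotents_lift_uniquely
    {R : Type*} [Ring R] (I : TwoSidedIdeal R) (hI : ∀ x ∈ I, IsNilpotent x) :
    IsAbelianRing R ↔
      (IsAbelianRing I.ringCon.Quotient ∧
        (∀ ebar : I.ringCon.Quotient, IsIdempotentElem ebar →
          ∃ e : R, IsIdempotentElem e ∧ I.ringCon.mk' e = ebar) ∧
        (∀ e f : R, IsIdempotentElem e → IsIdempotentElem f → e - f ∈ I → e = f)) := by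
  have hsurj : Function.Surjective I.ringCon.mk' := I.ringCon.mk'_surjective
  have hmem : ∀ x : R, x ∈ I ↔ I.ringCon.mk' x = 0 := fun x => by
    rw [TwoSidedIdeal.mem_iff, ← map_zero I.ringCon.mk']
    exact (RingCon.eq _).symm
  have hlift : ∀ ebar : I.ringCon.Quotient, IsIdempotentElem ebar →
      ∃ e : R, IsIdempotentElem e ∧ I.ringCon.mk' e = ebar := fun ebar h =>
    exists_isIdempotentElem_eq_of_ker_isNilpotent I.ringCon.mk'
      (fun x hx => hI x ((hmem x).2 hx)) ebar (hsurj ebar) h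
  constructor
  · intro hR
    refine ⟨fun ebar h rbar => ?_, hlift, fun e f he hf hef => ?_⟩
    · obtain ⟨e, he, rfl⟩ := hlift ebar h
      obtain ⟨r, rfl⟩ := hsurj rbar
      rw [← map_mul, ← map_mul, hR e he r]
    · exact eq_of_isNilpotent_sub_of_isIdempotentElem_of_commute he hf (hI _ hef) (hR e he f)
  · rintro ⟨hQ, -, huniq⟩ e he r
    have he' : e * e = e := he
    have hz : e * (1 - e) = 0 := he.mul_one_sub_self
    have hz' : (1 - e) * e = 0 := he.one_sub_mul_self
    have hcomm := hQ _ (he.map I.ringCon.mk') (I.ringCon.mk' r)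
    have hzbar : I.ringCon.mk' e * I.ringCon.mk' (1 - e) = 0 := by rw [← map_mul, hz, map_zero]
    have hzbar' : I.ringCon.mk' (1 - e) * I.ringCon.mk' e = 0 := by rw [← map_mul, hz', map_zero]
    -- an idempotent `e + x` with `x ∈ I` lifts the image of `e`, hence equals `e`
    have key : ∀ x : R, e * x + x * e = x → x * x = 0 → x ∈ I → x = 0 := fun x h hx hxI => by
      have := huniq (e + x) e (isIdempotentElem_add_of_peirce he h hx) he (by simpa using hxI)
      simpa using this
    have h₁ : e * r * (1 - e) = 0 := by
      apply key
      · rw [mul_assoc _ (1 - e) e, hz', mul_zero, add_zero, ← mul_assoc, ← mul_assoc, he']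
      · calc e * r * (1 - e) * (e * r * (1 - e)) = e * r * ((1 - e) * e) * (r * (1 - e)) := by
              simp only [mul_assoc]
          _ = 0 := by rw [hz', mul_zero, zero_mul]
      · rw [hmem, map_mul, map_mul, hcomm, mul_assoc, hzbar, mul_zero]
    have h₂ : (1 - e) * r * e = 0 := by
      apply key
      · rw [← mul_assoc, ← mul_assoc, hz, zero_mul, zero_mul, zero_add, mul_assoc _ e e, he']
      · calc (1 - e) * r * e * ((1 - e) * r * e) = (1 - e) * r * (e * (1 - e)) * (r * e) := by
              simp only [mul_assoc]
          _ = 0 := by rw [hz, mul_zero, zero_mul]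
      · rw [hmem, map_mul, map_mul, mul_assoc, ← hcomm, ← mul_assoc, hzbar', zero_mul]
    rw [mul_sub, mul_one, sub_eq_zero] at h₁
    rw [sub_mul, one_mul, sub_mul, sub_eq_zero] at h₂
    rw [h₁, h₂]
end

section
/- Let R be a ring. Then R is a CUNC-ring (every clean element of R is uniquely nil-clean) if and only if R is an abelian UU-ring. -/
/-!
Suppose `R` is CUNC. An idempotent `e = (1 - e) + (2e - 1)` is clean, because `2e - 1` squares
to `1`. If `x` lies in one of the Peirce corners `e R (1 - e)` and `(1 - e) R e`, then `x² = 0`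
and `e + x` is idempotent, hence clean. Its nil-clean decompositions `(e + x) + 0` and `e + x`
must agree, so `x = 0`. Both corners therefore vanish and `e` is central. A unit
`u = 0 + u` is clean, so `u = e + b` with `e` idempotent and `b` nilpotent; since `e` is central,
`e = u - b` is a unit, hence `e = 1`.

Suppose `R` is abelian and UU. Then `-1` is unipotent, so `2` is nilpotent, and a clean element
`e + (1 + b)` equals `(1 - e) + (2e + b)` with `2e + b` nilpotent. Uniqueness holds because, for
commuting idempotents, a nilpotent difference `d` satisfies `d³ = d` and hence is zero.
-/

open Pointwise

/-- Every idempotent `e` is clean, as `e = (1 - e) + (2e - 1)` with `(2e - 1)² = 1`. -/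
theorem isCleanElem_of_isIdempotentElem {R : Type*} [Ring R] {e : R}
    (he : IsIdempotentElem e) : IsCleanElem e := by
  have h : (e + e - 1) * (e + e - 1) = 1 := by
    have := he.eq
    simp only [mul_sub, sub_mul, mul_add, add_mul, this, mul_one, one_mul]
    abel
  exact ⟨1 - e, e + e - 1, he.one_sub, ⟨⟨_, _, h, h⟩, rfl⟩, by abel⟩

theorem IsCUNCRing.isAbelianRing {R : Type*} [Ring R] (h : IsCUNCRing R) :
    IsAbelianRing R := by
  intro e he r
  -- `e + x` is idempotent, with nil-clean decompositions `e + x` and `(e + x) + 0`.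
  have key : ∀ x : R, x * x = 0 → e * x + x * e = x → x = 0 := by
    intro x hx hex
    have hf : IsIdempotentElem (e + x) := by
      have : (e + x) * (e + x) = e * e + (e * x + x * e) + x * x := by
        noncomm_ring
      rw [IsIdempotentElem, this, hx, hex, he.eq, add_zero]
    have := (h (e + x) (isCleanElem_of_isIdempotentElem hf)).2 e x (e + x) 0 he
      ⟨2, by rw [pow_two, hx]⟩ hf IsNilpotent.zero rfl (add_zero _).symm
    simpa using this
  have hee : e * e = e := he
  have hr (y : R) : e * (e * y) = e * y := by rw [← mul_assoc, hee]
  have h1 := key (e * r - e * r * e)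
    (by simp only [mul_sub, sub_mul, mul_assoc, hr]; abel)
    (by simp only [mul_sub, sub_mul, mul_assoc, hr, hee]; abel)
  have h2 := key (r * e - e * r * e)
    (by simp only [mul_sub, sub_mul, mul_assoc, hr]; abel)
    (by simp only [mul_sub, sub_mul, mul_assoc, hr, hee]; abel)
  rw [sub_eq_zero.mp h1, sub_eq_zero.mp h2]

theorem IsCUNCRing.isUURing {R : Type*} [Ring R] (h : IsCUNCRing R) : IsUURing R := by
  intro u hu
  obtain ⟨⟨e, b, he, hb, hueb⟩, -⟩ := h u ⟨0, u, IsIdempotentElem.zero, hu, (zero_add u).symm⟩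
  have hub : Commute (-b) u := by
    have heb : e * b = b * e := h.isAbelianRing e he b
    rw [hueb]
    exact (Commute.add_right (show Commute b e from heb.symm) (Commute.refl b)).neg_left
  have hunit : IsUnit (u + -b) := hb.neg.isUnit_add_left_of_commute hu hub
  have he1 : u + -b = e := by rw [hueb]; abel
  rw [he1] at hunit
  have : e = 1 := hunit.mul_left_cancel (by rw [he.eq, mul_one])
  exact ⟨b, hb, by rw [hueb, this]⟩

/-- Commuting idempotents with nilpotent difference `d` are equal, since `d³ = d`. -/
theorem eq_of_isNilpotent_sub {R : Type*} [Ring R] {e f : R} (he : IsIdempotentElem e)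
    (hf : IsIdempotentElem f) (hef : e * f = f * e) (hn : IsNilpotent (e - f)) : e = f := by
  have hee : e * e = e := he
  have hff : f * f = f := hf
  have h3 : (e - f) * ((e - f) * (e - f)) = e - f := by
    have hr (y : R) : e * (e * y) = e * y := by rw [← mul_assoc, hee]
    have ht (y : R) : f * (e * y) = e * (f * y) := by rw [← mul_assoc, ← hef, mul_assoc]
    simp only [mul_sub, sub_mul, hee, hff, ← hef, hr, ht]
    abel
  have hid : IsIdempotentElem ((e - f) * (e - f)) := by
    rw [IsIdempotentElem, mul_assoc, h3]
  have h0 : (e - f) * (e - f) = 0 :=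
    hid.eq_zero_of_isNilpotent ((Commute.refl (e - f)).isNilpotent_mul_right hn)
  rw [h0, mul_zero] at h3
  exact sub_eq_zero.mp h3.symm

theorem IsUURing.isNilpotent_two {R : Type*} [Ring R] (h : IsUURing R) :
    IsNilpotent (2 : R) := by
  obtain ⟨n, hn, hn1⟩ := h (-1) isUnit_one.neg
  have : (2 : R) = -n := by
    rw [← one_add_one_eq_two, eq_neg_iff_add_eq_zero, add_assoc, ← hn1, add_neg_cancel]
  rw [this]
  exact hn.neg

/-- A ring is a CUNC-ring iff it is an abelian UU-ring. -/
theorem cunc_iff_abelian_uu {R : Type*} [Ring R] :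
    IsCUNCRing R ↔ (IsAbelianRing R ∧ IsUURing R) := by
  refine ⟨fun h => ⟨h.isAbelianRing, h.isUURing⟩, ?_⟩
  rintro ⟨hab, huu⟩ a ⟨e, u, he, hu, rfl⟩
  refine ⟨?_, ?_⟩
  · obtain ⟨b, hb, rfl⟩ := huu u hu
    have heb : Commute e b := hab e he b
    have h2e : IsNilpotent (2 * e) :=
      (Nat.cast_commute 2 e).isNilpotent_mul_right (by exact_mod_cast huu.isNilpotent_two)
    have hcomm : Commute (2 * e) b :=
      Commute.mul_left (by exact_mod_cast Nat.cast_commute 2 b) heb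
    exact ⟨1 - e, 2 * e + b, he.one_sub, hcomm.isNilpotent_add h2e hb, by rw [two_mul]; abel⟩
  · intro g b f c hg hb hf hc h1 h2
    have hgb : g + b = f + c := h1.symm.trans h2
    -- `c - b = g - f` is central, so `b` and `c` commute.
    have hc' : c = g - f + b := by
      rw [eq_sub_of_add_eq' hgb.symm]; abel
    have hcb : Commute c b := by
      rw [hc']
      exact ((show Commute g b from hab g hg b).sub_left (hab f hf b)).add_left (Commute.refl b)
    refine eq_of_isNilpotent_sub hg hf (hab g hg f) ?_
    rw [show g - f = c - b by rw [hc']; abel]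
    exact hcb.isNilpotent_sub hc hb
end

section
/- Let R be a ring. Then the following are equivalent: (1) R is a CUNC-ring (every clean element of R is uniquely nil-clean); (2) R is abelian and every clean element of R is nil-clean; (3) every nil-clean element of R is uniquely nil-clean and every unit of R is nil-clean. -/
/-!
Uniqueness of nil-clean decompositions of idempotents forces the ring to be abelian: for an
idempotent `e` and any `r`, the element `e + e r (1 - e)` is idempotent and is also the sum of `e`
and the square-zero element `e r (1 - e)`, so `e r (1 - e) = 0`, and symmetrically on the other
side (`isAbelianRing_of_idem_unique`). Idempotents are both clean and nil-clean, so this applies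
under (1) and under (3).

Conversely, in an abelian ring nil-clean decompositions are always unique, because `e + b = f + c`
makes `e - f = c - b` nilpotent, while `(e - f) ^ 3 = e - f`
(`IsAbelianRing.isUniquelyNilClean`).

It remains to see, in an abelian ring whose units are nil-clean, that clean elements are nil-clean.
Nil-clean units are unipotent (`IsAbelianRing.unipotent_of_isNilClean`), so `2` is nilpotent, and
`f + (1 + b) = (1 - f) + (2 f + b)` is a nil-clean decomposition.
-/

open Pointwise

/-- An element satisfying `x ^ 3 = x` is zero as soon as it is nilpotent. -/
lemma eq_zero_of_isNilpotent_of_cube {R : Type*} [Ring R] {x : R} (hx : IsNilpotent x)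
    (h : x * x * x = x) : x = 0 := by
  have hk : ∀ k : ℕ, (x * x) ^ k * x = x := by
    intro k
    induction k with
    | zero => simp
    | succ k ih => rw [pow_succ, mul_assoc, h, ih]
  obtain ⟨n, hn⟩ := hx
  rw [← hk n, ← sq, ← pow_mul, mul_comm 2 n, pow_mul, hn, sq, zero_mul, zero_mul]

lemma isAbelianRing_of_idem_unique {R : Type*} [Ring R]
    (h : ∀ f : R, IsIdempotentElem f → IsUniquelyNilCleanElem f) : IsAbelianRing R := by
  -- An idempotent cannot be the sum of another idempotent and a square-zero element.
  have key : ∀ e n : R, IsIdempotentElem e → n * n = 0 → IsIdempotentElem (e + n) → n = 0 := by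
    intro e n he hn hf
    have := (h _ hf).2 (e + n) 0 e n hf .zero he ⟨2, by rw [sq, hn]⟩ (add_zero _).symm rfl
    simpa using this
  intro e he r
  have h0 : (1 - e) * e = 0 := he.one_sub_mul_self
  have h1 : e * (1 - e) = 0 := he.mul_one_sub_self
  have hl : e * r * (1 - e) = 0 := by
    have hn : e * r * (1 - e) * (e * r * (1 - e)) = 0 := by
      rw [show e * r * (1 - e) * (e * r * (1 - e)) = e * r * ((1 - e) * e) * (r * (1 - e)) by
        simp only [mul_assoc], h0, mul_zero, zero_mul]
    refine key e _ he hn ?_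
    have ha : e * (e * r * (1 - e)) = e * r * (1 - e) := by rw [← mul_assoc, ← mul_assoc, he.eq]
    have hb : e * r * (1 - e) * e = 0 := by rw [mul_assoc, h0, mul_zero]
    rw [IsIdempotentElem, mul_add, add_mul, add_mul, ha, hb, hn, he.eq, add_zero, add_zero]
  have hr : (1 - e) * r * e = 0 := by
    have hn : (1 - e) * r * e * ((1 - e) * r * e) = 0 := by
      rw [show (1 - e) * r * e * ((1 - e) * r * e) = (1 - e) * r * (e * (1 - e)) * (r * e) by
        simp only [mul_assoc], h1, mul_zero, zero_mul]
    refine key e _ he hn ?_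
    have ha : e * ((1 - e) * r * e) = 0 := by rw [← mul_assoc, ← mul_assoc, h1, zero_mul, zero_mul]
    have hb : (1 - e) * r * e * e = (1 - e) * r * e := by rw [mul_assoc, he.eq]
    rw [IsIdempotentElem, mul_add, add_mul, add_mul, ha, hb, hn, he.eq, add_zero, add_zero]
  rw [mul_sub, mul_one, sub_eq_zero] at hl
  rw [sub_mul, sub_mul, one_mul, sub_eq_zero] at hr
  rw [hl, hr]

lemma IsAbelianRing.isUniquelyNilClean {R : Type*} [Ring R] (hR : IsAbelianRing R) {a : R}
    (ha : IsNilCleanElem a) : IsUniquelyNilCleanElem a := by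
  refine ⟨ha, fun e b f c he hb hf hc h₁ h₂ => ?_⟩
  have hb' : b = a - e := by rw [h₁, add_sub_cancel_left]
  have hc' : c = a - f := by rw [h₂, add_sub_cancel_left]
  have hef : e * f = f * e := hR e he f
  have hcomm : Commute c b := by
    rw [hb', hc']
    exact ((Commute.refl a).sub_right (hR e he a).symm).sub_left
      (show Commute f (a - e) from hR f hf _)
  have hnil : IsNilpotent (e - f) := by
    have : e - f = c - b := by rw [hb', hc']; abel
    rw [this]
    exact hcomm.isNilpotent_sub hc hb
  refine sub_eq_zero.mp (eq_zero_of_isNilpotent_of_cube hnil ?_)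
  have hfe : e * f * e = e * f := by rw [mul_assoc, ← hef, ← mul_assoc, he.eq]
  have hff : e * f * f = e * f := by rw [mul_assoc, hf.eq]
  simp only [sub_mul, mul_sub, he.eq, hf.eq, ← hef, hfe, hff]
  abel

/-- In an abelian ring the idempotent in a nil-clean decomposition `u = e + b` of a unit is `1`,
because `1 - e = (1 - e) b u⁻¹` is nilpotent. -/
lemma IsAbelianRing.unipotent_of_isNilClean {R : Type*} [Ring R] (hR : IsAbelianRing R) {u : R}
    (hu : IsUnit u) (h : IsNilCleanElem u) : ∃ b : R, IsNilpotent b ∧ u = 1 + b := by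
  obtain ⟨e, b, he, hb, hub⟩ := h
  refine ⟨b, hb, ?_⟩
  obtain ⟨u, rfl⟩ := hu
  have hbu : Commute b (u : R) := by
    rw [hub]
    exact (show Commute e b from hR e he b).symm.add_right (Commute.refl b)
  have hnil : IsNilpotent (1 - e) := by
    have h1 : (1 - e) * (u : R) = (1 - e) * b := by
      rw [hub, mul_add, he.one_sub_mul_self, zero_add]
    have h2 : 1 - e = (1 - e) * (b * (↑u⁻¹ : R)) := by
      rw [← mul_assoc, ← h1, Units.mul_inv_cancel_right]
    rw [h2]
    exact (show Commute (1 - e) _ from hR _ he.one_sub _).isNilpotent_mul_left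
      (hbu.units_inv_right.isNilpotent_mul_right hb)
  have h0 := eq_zero_of_isNilpotent_of_cube hnil (by rw [he.one_sub.eq, he.one_sub.eq])
  rw [hub, ← sub_eq_zero.mp h0]

/-- Characterizations of CUNC-rings. -/
theorem cunc_tfae {R : Type*} [Ring R] :
    [IsCUNCRing R,
     IsAbelianRing R ∧ ∀ a : R, IsCleanElem a → IsNilCleanElem a,
     (∀ a : R, IsNilCleanElem a → IsUniquelyNilCleanElem a) ∧
       ∀ u : R, IsUnit u → IsNilCleanElem u].TFAE := by
  tfae_have 1 → 2 := by
    intro h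
    refine ⟨isAbelianRing_of_idem_unique fun f hf => h f ?_, fun a ha => (h a ha).1⟩
    -- The unit `2 f - 1` is its own inverse, so `f = (1 - f) + (2 f - 1)` is clean.
    have hsq : (2 * f - 1) * (2 * f - 1) = 1 := by
      have : (2 * f - 1) * (2 * f - 1) = 4 * (f * f) - 4 * f + 1 := by noncomm_ring
      rw [this, hf.eq, sub_self, zero_add]
    exact ⟨1 - f, 2 * f - 1, hf.one_sub, ⟨⟨_, _, hsq, hsq⟩, rfl⟩, by noncomm_ring⟩
  tfae_have 2 → 1 := fun h a ha => h.1.isUniquelyNilClean (h.2 a ha)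
  tfae_have 2 → 3 := fun h => ⟨fun a ha => h.1.isUniquelyNilClean ha,
    fun u hu => h.2 u ⟨0, u, .zero, hu, (zero_add u).symm⟩⟩
  tfae_have 3 → 2 := by
    rintro ⟨h, hU⟩
    have hR : IsAbelianRing R := isAbelianRing_of_idem_unique fun f hf =>
      h f ⟨f, 0, hf, .zero, (add_zero f).symm⟩
    refine ⟨hR, ?_⟩
    rintro a ⟨f, u, hf, hu, rfl⟩
    obtain ⟨b, hb, rfl⟩ := hR.unipotent_of_isNilClean hu (hU u hu)
    -- Unipotence of `-1` makes `2` nilpotent.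
    obtain ⟨c, hc, hc1⟩ := hR.unipotent_of_isNilClean (isUnit_one.neg) (hU _ isUnit_one.neg)
    have h2 : IsNilpotent (2 : R) := by
      have : (2 : R) = -c := by
        rw [← one_add_one_eq_two, eq_neg_iff_add_eq_zero, add_assoc, ← hc1, add_neg_cancel]
      rw [this]
      exact hc.neg
    have h2f : IsNilpotent (2 * f) := (Nat.cast_commute 2 f : Commute (2 : R) f).isNilpotent_mul_right h2
    have hcomm : Commute (2 * f) b := (Nat.cast_commute 2 b : Commute (2 : R) b).mul_left (hR f hf b)
    exact ⟨1 - f, 2 * f + b, hf.one_sub, hcomm.isNilpotent_add h2f hb, by noncomm_ring⟩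
  tfae_finish
end

section
/- For any nontrivial ring R, the formal power series ring R[[x]] is not a CUNC-ring. -/
/-!
Since `X = 1 + (X - 1)` and `X - 1` is a unit, `X` is clean in `R⟦X⟧`; it is not even nil-clean.
If `X = e + b` with `e` idempotent and `b` nilpotent, comparing constant coefficients gives
`e₀ = -b₀`, which is both idempotent and nilpotent, so `e₀ = 0`. An idempotent power series with
zero constant coefficient vanishes because `1 - e` is a unit killing `e`. Hence `X = b` would be
nilpotent, which is impossible when `R` is nontrivial.
-/

open Pointwise

/-- For any nontrivial ring `R`, the power series ring `R[[x]]` is not a CUNC-ring. -/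
theorem powerSeries_not_cunc (R : Type*) [Ring R] [Nontrivial R] :
    ¬ IsCUNCRing (PowerSeries R) := by
  intro h
  have hclean : IsCleanElem (PowerSeries.X : PowerSeries R) := by
    refine ⟨1, PowerSeries.X - 1, IsIdempotentElem.one, ?_, by abel⟩
    rw [PowerSeries.isUnit_iff_constantCoeff]
    simp
  obtain ⟨⟨e, b, he, hb, hX⟩, -⟩ := h _ hclean
  have he0 : PowerSeries.constantCoeff e = 0 := by
    have hsum : 0 = PowerSeries.constantCoeff e + PowerSeries.constantCoeff b := by
      rw [← map_add, ← hX, PowerSeries.constantCoeff_X]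
    have hnil : IsNilpotent (PowerSeries.constantCoeff e) := by
      rw [eq_neg_of_add_eq_zero_left hsum.symm]
      exact (hb.map PowerSeries.constantCoeff).neg
    obtain ⟨n, hn⟩ := hnil
    rw [← (he.map PowerSeries.constantCoeff).pow_succ_eq n, pow_succ, hn, zero_mul]
  have he_zero : e = 0 := by
    -- `1 - e` has constant coefficient `1`, hence is a unit, and it annihilates `e`.
    have hu : IsUnit (1 - e) := by
      rw [PowerSeries.isUnit_iff_constantCoeff]
      simp [he0]
    refine hu.mul_right_eq_zero.mp ?_
    rw [sub_mul, one_mul, he.eq, sub_self]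
  obtain ⟨n, hn⟩ := hb
  rw [he_zero, zero_add] at hX
  rw [← hX] at hn
  have hcoeff := congrArg (PowerSeries.coeff n) hn
  simp [PowerSeries.coeff_X_pow] at hcoeff
end

section
/- Let R be a commutative ring. Then the polynomial ring R[x] is a CUNC-ring if and only if R is a CUNC-ring. -/
/-!
Over a commutative ring, idempotents congruent modulo the nilradical are equal, so uniqueness in a nil-clean
decomposition is automatic, and being CUNC turns out to be the same as being a UU-ring, i.e. having
only unipotent units (`isCUNCRing_iff_isUURing`). If all units are unipotent, then so is `-1`, hence
`2` is nilpotent, and a clean element `e + (1 + b)` is nil-clean because it equals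
`(1 - e) + (2 * e + b)`.

The UU property passes between `R` and `R[x]`, since a polynomial is a unit exactly when its constant
coefficient is a unit and its other coefficients are nilpotent, and is nilpotent exactly when
all its coefficients are.
-/


open Pointwise

theorem isCUNCRing_iff_isUURing (S : Type*) [CommRing S] : IsCUNCRing S ↔ IsUURing S := by
  constructor
  · intro h u hu
    obtain ⟨⟨e, b, he, hb, hab⟩, -⟩ := h u ⟨0, u, IsIdempotentElem.zero, hu, (zero_add u).symm⟩
    -- `e = u - b` differs from a unit by a nilpotent, so it is an idempotent unit.
    have heu : IsUnit e := by
      have h1 : IsUnit (u + -b) :=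
        hb.neg.isUnit_add_left_of_commute hu (Commute.all _ _)
      rwa [show u + -b = e by rw [hab]; ring] at h1
    have he1 : e = 1 := heu.mul_left_cancel (by rw [he.eq, mul_one])
    exact ⟨b, hb, by rw [hab, he1]⟩
  · intro h a ⟨e, u, he, hu, ha⟩
    obtain ⟨b, hb, rfl⟩ := h u hu
    have h2 : IsNilpotent (2 : S) := by
      obtain ⟨c, hc, hc1⟩ := h (-1) isUnit_one.neg
      have hc2 : (2 : S) = -c := by linear_combination -hc1
      rw [hc2]
      exact hc.neg
    refine ⟨⟨1 - e, 2 * e + b, he.one_sub, ?_, by rw [ha]; ring⟩, ?_⟩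
    · exact (Commute.all _ _).isNilpotent_add ((Commute.all _ _).isNilpotent_mul_right h2) hb
    · intro e b f c he hb hf hc h1 h2
      refine eq_of_isNilpotent_sub_of_isIdempotentElem he hf ?_
      rw [show e - f = c - b by linear_combination h2 - h1]
      exact (Commute.all _ _).isNilpotent_sub hc hb

theorem isUURing_polynomial_iff (R : Type*) [CommRing R] :
    IsUURing (Polynomial R) ↔ IsUURing R := by
  constructor
  · intro h u hu
    obtain ⟨p, hp, hup⟩ := h (Polynomial.C u) (hu.map Polynomial.C)
    refine ⟨p.coeff 0, Polynomial.isNilpotent_iff.mp hp 0, ?_⟩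
    simpa using congrArg (fun q => Polynomial.coeff q 0) hup
  · intro h p hp
    obtain ⟨hp0, hpn⟩ := Polynomial.isUnit_iff_coeff_isUnit_isNilpotent.mp hp
    obtain ⟨b, hb, hpb⟩ := h _ hp0
    refine ⟨p - 1, Polynomial.isNilpotent_iff.mpr fun i => ?_, by ring⟩
    rcases eq_or_ne i 0 with rfl | hi
    · simpa [hpb] using hb
    · simpa [Polynomial.coeff_one, hi] using hpn i hi

/-- For a commutative ring `R`, the polynomial ring `R[x]` is a CUNC-ring iff `R` is. -/
theorem polynomial_cunc_iff (R : Type*) [CommRing R] :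
    IsCUNCRing (Polynomial R) ↔ IsCUNCRing R := by
  rw [isCUNCRing_iff_isUURing, isCUNCRing_iff_isUURing, isUURing_polynomial_iff]
end

section
/- If R is a CUNC-ring, then 2 is a nilpotent element of R. -/
open Pointwise

/-- In a CUNC-ring, `2` is nilpotent. -/
theorem two_nilpotent_of_cunc {R : Type*} [Ring R] (h : IsCUNCRing R) :
    IsNilpotent (2 : R) := by
  -- `-1 = 0 + (-1)` is clean, so `-1 = e + b` with `e` idempotent and `b` nilpotent.
  obtain ⟨⟨e, b, he, hb, hab⟩, -⟩ :=
    h (-1) ⟨0, -1, IsIdempotentElem.zero, isUnit_one.neg, (zero_add _).symm⟩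
  -- Then `e = -(1 + b)` is a unit, and the only idempotent unit is `1`.
  have hu : IsUnit e := by
    rw [show e = -(1 + b) by rw [neg_add, hab]; abel]
    exact hb.isUnit_one_add.neg
  have h1 : e = 1 := hu.mul_left_cancel (by rw [he.eq, mul_one])
  have h2 : (2 : R) = -b := by
    rw [← one_add_one_eq_two, eq_neg_iff_add_eq_zero, add_assoc, ← h1, ← hab, h1, add_neg_cancel]
  rw [h2]
  exact hb.neg
end

section
/- If R is a CUNC-ring and I is a nil two-sided ideal of R, then the quotient ring R/I is a CUNC-ring. -/
/-!
Let `π : R → R/I` be the projection. Since `I` is nil, idempotents lift along `π`, and every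
preimage of a unit is a unit, every preimage of a nilpotent is nilpotent. Hence any clean (resp.
nil-clean) decomposition `e + x` of `π r` lifts to one of `r` itself: lift `e` to an idempotent
`e'` and take `r - e'` as the second summand. A clean element of `R/I` therefore has only clean
preimages, and existence and uniqueness of nil-clean decompositions pass from such a preimage to
its image.
-/

open Pointwise

section NilKernel

variable {R S : Type*} [Ring R] [Ring S] (f : R →+* S)

lemma isNilpotent_of_map_of_nil_ker (hk : ∀ x, f x = 0 → IsNilpotent x) {x : R}
    (hx : IsNilpotent (f x)) : IsNilpotent x := by
  obtain ⟨n, hn⟩ := hx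
  obtain ⟨m, hm⟩ := hk (x ^ n) (by rw [map_pow, hn])
  exact ⟨n * m, by rw [pow_mul, hm]⟩

lemma isUnit_of_map_of_nil_ker (hf : Function.Surjective f)
    (hk : ∀ x, f x = 0 → IsNilpotent x) {x : R} (hx : IsUnit (f x)) : IsUnit x := by
  have key : ∀ z, f z = 1 → IsUnit z := fun z hz => by
    simpa using (hk (z - 1) (by simp [hz])).isUnit_add_one
  obtain ⟨v, hxv, hvx⟩ := isUnit_iff_exists.1 hx
  obtain ⟨y, rfl⟩ := hf v
  obtain ⟨p, hp⟩ := (key (x * y) (by simpa using hxv)).exists_right_inv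
  obtain ⟨q, hq⟩ := (key (y * x) (by simpa using hvx)).exists_left_inv
  exact isUnit_iff_exists_and_exists.2
    ⟨⟨y * p, by rw [← mul_assoc, hp]⟩, ⟨q * y, by rw [mul_assoc, hq]⟩⟩

/-- The CUNC property passes along a surjective ring homomorphism with nil kernel. -/
lemma isCUNCRing_of_nil_ker (h : IsCUNCRing R) (hf : Function.Surjective f)
    (hk : ∀ x, f x = 0 → IsNilpotent x) : IsCUNCRing S := by
  have lift : ∀ e : S, IsIdempotentElem e → ∃ e' : R, IsIdempotentElem e' ∧ f e' = e :=
    fun e he => exists_isIdempotentElem_eq_of_ker_isNilpotent f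
      (fun x hx => hk x hx) e (hf e) he
  have clean : ∀ r : R, IsCleanElem (f r) → IsCleanElem r := by
    rintro r ⟨e, u, he, hu, hr⟩
    obtain ⟨e', he', rfl⟩ := lift e he
    exact ⟨e', r - e', he', isUnit_of_map_of_nil_ker f hf hk (by simpa [hr] using hu), by abel⟩
  intro a ha
  obtain ⟨r, rfl⟩ := hf a
  obtain ⟨⟨e, b, he, hb, hr⟩, huniq⟩ := h r (clean r ha)
  refine ⟨⟨f e, f b, he.map f, hb.map f, by rw [hr, map_add]⟩, ?_⟩
  intro e₁ b₁ e₂ b₂ he₁ hb₁ he₂ hb₂ h₁ h₂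
  obtain ⟨e₁, he₁', rfl⟩ := lift e₁ he₁
  obtain ⟨e₂, he₂', rfl⟩ := lift e₂ he₂
  rw [huniq e₁ (r - e₁) e₂ (r - e₂) he₁'
    (isNilpotent_of_map_of_nil_ker f hk (by simpa [h₁] using hb₁)) he₂'
    (isNilpotent_of_map_of_nil_ker f hk (by simpa [h₂] using hb₂)) (by abel) (by abel)]

end NilKernel

/-- The quotient of a CUNC-ring by a nil two-sided ideal is a CUNC-ring. -/
theorem quotient_cunc_of_cunc {R : Type*} [Ring R] (h : IsCUNCRing R)
    (I : TwoSidedIdeal R) (hI : ∀ x ∈ I, IsNilpotent x) :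
    IsCUNCRing I.ringCon.Quotient := by
  refine isCUNCRing_of_nil_ker I.ringCon.mk' h I.ringCon.mk'_surjective fun x hx => hI x ?_
  exact (TwoSidedIdeal.mem_iff I x).2 ((RingCon.eq I.ringCon).1 hx)
end
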